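/- arXiv:1712.03252 — 5 statements merged into one kernel-verified Lean document; each statement's English description precedes it below -/
import Mathlib

section
/- Let p > 1 and let N, n ≥ 1 be integers. There exists a constant c = c(N, p) > 0, independent of μ, such that for every μ ∈ [0, 1] and every pair of matrices a, b ∈ ℝ^{N×n} (equipped with the Euclidean/Frobenius norm), ‖(μ² + ‖a‖²)^{(p−2)/4} a − (μ² + ‖b‖²)^{(p−2)/4} b‖² ≤ c (μ² + ‖a‖² + ‖b‖²)^{(p−2)/2} ‖a − b‖². -/
lemma aux_t (r t : ℝ) (hr : -1 ≤ r) (ht : 0 < t) (ht1 : t ≤ 1) :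
    t * |1 - t ^ r| ≤ (1 + |r|) * (1 - t) := by
  have habs := abs_nonneg r
  have h0 : 0 ≤ |r| * (1 - t) := mul_nonneg habs (by linarith)
  have hpos : 0 < t ^ r := Real.rpow_pos_of_pos ht r
  rcases le_total 0 r with h | h
  · have h1 : t ^ r ≤ 1 := Real.rpow_le_one ht.le ht1 h
    rw [abs_of_nonneg (by linarith)]
    have h2 : 1 - t ^ r ≤ (1 + |r|) * (1 - t) := by
      rcases le_total 1 r with h3 | h3
      · have := one_add_mul_self_le_rpow_one_add (s := t - 1) (by linarith) h3
        rw [abs_of_nonneg h]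
        have e : 1 + (t - 1) = t := by ring
        rw [e] at this
        nlinarith
      · have : t ^ (1:ℝ) ≤ t ^ r := Real.rpow_le_rpow_of_exponent_ge ht ht1 h3
        rw [Real.rpow_one] at this
        nlinarith
    nlinarith
  · have h1 : 1 ≤ t ^ r := Real.one_le_rpow_of_pos_of_le_one_of_nonpos ht ht1 h
    rw [abs_of_nonpos (by linarith)]
    have h2 : t ^ (r + 1) ≤ 1 := Real.rpow_le_one ht.le ht1 (by linarith)
    rw [Real.rpow_add ht, Real.rpow_one] at h2
    nlinarith

lemma aux_main {E : Type*} [NormedAddCommGroup E] [NormedSpace ℝ E] (p : ℝ) (hp : 1 < p)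
    (μ : ℝ) (a b : E) (hab : ‖b‖ ≤ ‖a‖) :
    ‖((μ ^ 2 + ‖a‖ ^ 2) ^ ((p - 2) / 4)) • a -
        ((μ ^ 2 + ‖b‖ ^ 2) ^ ((p - 2) / 4)) • b‖ ^ 2 ≤
      ((2 + |(p - 2) / 2|) ^ 2 * 2 ^ |(p - 2) / 2|) *
        ((μ ^ 2 + ‖a‖ ^ 2 + ‖b‖ ^ 2) ^ ((p - 2) / 2)) * ‖a - b‖ ^ 2 := by
  by_cases ha : a = 0
  · subst ha
    have hb : b = 0 := by simpa using hab
    subst hb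
    simp
  have hna : 0 < ‖a‖ := norm_pos_iff.2 ha
  set r := (p - 2) / 2 with hr
  have hr1 : -1 ≤ r := by rw [hr]; linarith
  have hq : (p - 2) / 4 = r / 2 := by rw [hr]; ring
  rw [hq]
  set A := μ ^ 2 + ‖a‖ ^ 2 with hA
  set B := μ ^ 2 + ‖b‖ ^ 2 with hB
  have hApos : 0 < A := by positivity
  have hBA : B ≤ A := by
    have := pow_le_pow_left₀ (norm_nonneg b) hab 2
    linarith
  have hAq : 0 < A ^ (r / 2) := Real.rpow_pos_of_pos hApos _
  -- key estimate
  have key : |A ^ (r / 2) - B ^ (r / 2)| * ‖b‖ ≤ (1 + |r|) * (A ^ (r / 2) * ‖a - b‖) := by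
    by_cases hb : b = 0
    · subst hb
      simp only [norm_zero, mul_zero]
      positivity
    have hnb : 0 < ‖b‖ := norm_pos_iff.2 hb
    have hBpos : 0 < B := by positivity
    have hα : 0 < √A := Real.sqrt_pos.2 hApos
    have hβ : 0 < √B := Real.sqrt_pos.2 hBpos
    have hα2 : √A ^ 2 = A := Real.sq_sqrt hApos.le
    have hβ2 : √B ^ 2 = B := Real.sq_sqrt hBpos.le
    have hβα : √B ≤ √A := Real.sqrt_le_sqrt hBA
    have hbβ : ‖b‖ ≤ √B := Real.le_sqrt_of_sq_le (by nlinarith [sq_nonneg μ])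
    have haα : ‖a‖ ≤ √A := Real.le_sqrt_of_sq_le (by nlinarith [sq_nonneg μ])
    have hd : ‖a‖ - ‖b‖ ≤ ‖a - b‖ := norm_sub_norm_le a b
    have hdiff : √A - √B ≤ ‖a - b‖ := by
      have h1 : (√A - √B) * (√A + √B) = (‖a‖ - ‖b‖) * (‖a‖ + ‖b‖) := by
        have : A - B = ‖a‖ ^ 2 - ‖b‖ ^ 2 := by rw [hA, hB]; ring
        linarith
      have h2 : (‖a‖ - ‖b‖) * (‖a‖ + ‖b‖) ≤ ‖a - b‖ * (√A + √B) :=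
        mul_le_mul hd (by linarith) (by positivity) (norm_nonneg _)
      rw [← h1] at h2
      exact le_of_mul_le_mul_right h2 (by positivity)
    have ht : 0 < √B / √A := by positivity
    have ht1 : √B / √A ≤ 1 := (div_le_one hα).2 hβα
    have hmain := aux_t r _ hr1 ht ht1
    have eA : A ^ (r / 2) = √A ^ r := by
      rw [Real.sqrt_eq_rpow, ← Real.rpow_mul hApos.le]; congr 1; ring
    have eB : B ^ (r / 2) = √B ^ r := by
      rw [Real.sqrt_eq_rpow, ← Real.rpow_mul hBpos.le]; congr 1; ring
    have eB2 : √B ^ r = √A ^ r * (√B / √A) ^ r := by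
      rw [← Real.mul_rpow hα.le ht.le]; congr 1; field_simp
    rw [eA] at hAq ⊢
    rw [eB, eB2]
    have e3 : |√A ^ r - √A ^ r * (√B / √A) ^ r| = √A ^ r * |1 - (√B / √A) ^ r| := by
      rw [← abs_of_pos hAq, ← abs_mul, abs_of_pos hAq]; congr 1; ring
    rw [e3]
    calc √A ^ r * |1 - (√B / √A) ^ r| * ‖b‖
        ≤ √A ^ r * |1 - (√B / √A) ^ r| * √B := by gcongr
      _ = √A ^ r * √A * (√B / √A * |1 - (√B / √A) ^ r|) := by field_simp
      _ ≤ √A ^ r * √A * ((1 + |r|) * (1 - √B / √A)) := by gcongr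
      _ = (1 + |r|) * (√A ^ r * (√A - √B)) := by field_simp
      _ ≤ (1 + |r|) * (√A ^ r * ‖a - b‖) := by gcongr
  have hnorm : ‖A ^ (r / 2) • a - B ^ (r / 2) • b‖ ≤ (2 + |r|) * (A ^ (r / 2) * ‖a - b‖) := by
    have e : A ^ (r / 2) • a - B ^ (r / 2) • b
        = A ^ (r / 2) • (a - b) + (A ^ (r / 2) - B ^ (r / 2)) • b := by
      rw [smul_sub, sub_smul]; abel
    rw [e]
    refine (norm_add_le _ _).trans ?_
    rw [norm_smul, norm_smul, Real.norm_eq_abs, Real.norm_eq_abs, abs_of_pos hAq]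
    linarith
  have hS : A ^ r ≤ 2 ^ |r| * (A + ‖b‖ ^ 2) ^ r := by
    have hb2 : ‖b‖ ^ 2 ≤ A := by nlinarith [sq_nonneg μ]
    have hSA : A ≤ A + ‖b‖ ^ 2 := by nlinarith [sq_nonneg ‖b‖]
    rcases le_total 0 r with h | h
    · have h1 : A ^ r ≤ (A + ‖b‖ ^ 2) ^ r := Real.rpow_le_rpow hApos.le hSA h
      have h2 : (1:ℝ) ≤ 2 ^ |r| := Real.one_le_rpow (by norm_num) (abs_nonneg _)
      nlinarith [Real.rpow_pos_of_pos hApos r]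
    · have h1 : (2 * A) ^ r ≤ (A + ‖b‖ ^ 2) ^ r :=
        Real.rpow_le_rpow_of_nonpos (by linarith) (by linarith) h
      rw [Real.mul_rpow (by norm_num) hApos.le] at h1
      calc A ^ r = 2 ^ |r| * (2 ^ r * A ^ r) := by
            rw [← mul_assoc, ← Real.rpow_add (by norm_num), abs_of_nonpos h]; simp
        _ ≤ _ := by gcongr
  have hAsq : (A ^ (r / 2)) ^ 2 = A ^ r := by
    rw [← Real.rpow_natCast, ← Real.rpow_mul hApos.le]; congr 1; push_cast; ring
  calc ‖A ^ (r / 2) • a - B ^ (r / 2) • b‖ ^ 2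
      ≤ ((2 + |r|) * (A ^ (r / 2) * ‖a - b‖)) ^ 2 := by gcongr
    _ = (2 + |r|) ^ 2 * A ^ r * ‖a - b‖ ^ 2 := by rw [← hAsq]; ring
    _ ≤ (2 + |r|) ^ 2 * (2 ^ |r| * (A + ‖b‖ ^ 2) ^ r) * ‖a - b‖ ^ 2 := by gcongr
    _ = _ := by ring

/-- For `p > 1` there is a constant `c = c(N, p) > 0`, independent of `μ`, such that for all
`μ ∈ [0,1]` and all matrices `a, b ∈ ℝ^{N×n}` (Frobenius norm),
`‖(μ² + ‖a‖²)^{(p−2)/4} a − (μ² + ‖b‖²)^{(p−2)/4} b‖² ≤ c (μ² + ‖a‖² + ‖b‖²)^{(p−2)/2} ‖a − b‖²`. -/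
theorem stmt_1 (p : ℝ) (hp : 1 < p) (N : ℕ) (hN : 1 ≤ N) :
    ∃ c : ℝ, 0 < c ∧
      ∀ (n : ℕ), 1 ≤ n → ∀ μ : ℝ, 0 ≤ μ → μ ≤ 1 →
        ∀ a b : EuclideanSpace ℝ (Fin N × Fin n),
          ‖((μ ^ 2 + ‖a‖ ^ 2) ^ ((p - 2) / 4)) • a -
              ((μ ^ 2 + ‖b‖ ^ 2) ^ ((p - 2) / 4)) • b‖ ^ 2 ≤
            c * ((μ ^ 2 + ‖a‖ ^ 2 + ‖b‖ ^ 2) ^ ((p - 2) / 2)) * ‖a - b‖ ^ 2 := by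
  refine ⟨(2 + |(p - 2) / 2|) ^ 2 * 2 ^ |(p - 2) / 2|, by positivity, ?_⟩
  intro n _ μ _ _ a b
  rcases le_total ‖b‖ ‖a‖ with h | h
  · exact aux_main p hp μ a b h
  · have := aux_main p hp μ b a h
    rw [norm_sub_rev, norm_sub_rev a b, add_right_comm]
    exact this
end

section
/- Let 0 < ρ < R₀, let h : [ρ, R₀] → ℝ be a non-negative bounded function, and let 0 < θ < 1, A ≥ 0 and β > 0. Assume that h(r) ≤ A/(d − r)^β + θ h(d) whenever ρ ≤ r < d ≤ R₀. Then there exists a constant c = c(θ, β) > 0, depending only on θ and β, such that h(ρ) ≤ c A/(R₀ − ρ)^β. -/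
/-- Iteration lemma: if `h : [ρ, R₀] → ℝ` is non-negative and bounded and satisfies
`h(r) ≤ A/(d−r)^β + θ h(d)` for `ρ ≤ r < d ≤ R₀`, with `0 < θ < 1`, `A ≥ 0`, `β > 0`,
then `h(ρ) ≤ c A/(R₀−ρ)^β` with `c = c(θ, β) > 0`. -/
theorem stmt_3 (θ β : ℝ) (hθ0 : 0 < θ) (hθ1 : θ < 1) (hβ : 0 < β) :
    ∃ c : ℝ, 0 < c ∧
      ∀ (ρ R₀ A : ℝ) (h : ℝ → ℝ),
        0 < ρ → ρ < R₀ → 0 ≤ A →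
        (∀ r ∈ Set.Icc ρ R₀, 0 ≤ h r) →
        (∃ B : ℝ, ∀ r ∈ Set.Icc ρ R₀, h r ≤ B) →
        (∀ r d : ℝ, ρ ≤ r → r < d → d ≤ R₀ → h r ≤ A / (d - r) ^ β + θ * h d) →
        h ρ ≤ c * A / (R₀ - ρ) ^ β := by
  obtain ⟨s, hs⟩ : ∃ s : ℝ, s = (1 + θ) / 2 := ⟨_, rfl⟩
  have hs0 : 0 < s := by linarith
  have hs1 : s < 1 := by linarith
  have hsθ : θ < s := by linarith
  obtain ⟨τ, hτ⟩ : ∃ τ : ℝ, τ = s ^ (1 / β) := ⟨_, rfl⟩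
  have hτ0 : 0 < τ := hτ ▸ Real.rpow_pos_of_pos hs0 _
  have hτ1 : τ < 1 := hτ ▸ Real.rpow_lt_one hs0.le hs1 (by positivity)
  have hτβ : τ ^ β = s := by
    rw [hτ, ← Real.rpow_mul hs0.le, one_div, inv_mul_cancel₀ hβ.ne', Real.rpow_one]
  obtain ⟨K, hK⟩ : ∃ K : ℝ, K = (1 - τ) ^ β := ⟨_, rfl⟩
  have hK0 : 0 < K := hK ▸ Real.rpow_pos_of_pos (by linarith) _
  have hsub : 0 < s - θ := by linarith
  obtain ⟨c, hc⟩ : ∃ c : ℝ, c = s / (K * (s - θ)) := ⟨_, rfl⟩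
  have hc0 : 0 < c := by rw [hc]; positivity
  have hceq : 1 / K + θ * (c / s) = c := by
    rw [hc]; field_simp; ring
  refine ⟨c, hc0, ?_⟩
  rintro ρ R₀ A h hρ hρR hA hh ⟨B, hB⟩ hrec
  have key : ∀ n : ℕ, ∀ r, ρ ≤ r → r < R₀ → h r ≤ c * A / (R₀ - r) ^ β + θ ^ n * B := by
    intro n
    induction n with
    | zero =>
      intro r h1 h2
      have := hB r ⟨h1, h2.le⟩
      have hL : 0 < (R₀ - r) ^ β := Real.rpow_pos_of_pos (by linarith) _
      have : 0 ≤ c * A / (R₀ - r) ^ β := by positivity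
      simp only [pow_zero, one_mul]
      linarith
    | succ n ih =>
      intro r h1 h2
      have hL0 : 0 < R₀ - r := by linarith
      have hL : 0 < (R₀ - r) ^ β := Real.rpow_pos_of_pos hL0 _
      have ha : 0 < τ * (R₀ - r) := by positivity
      have hb : 0 < (1 - τ) * (R₀ - r) := mul_pos (by linarith) hL0
      have e1 := hrec r (R₀ - τ * (R₀ - r)) h1 (by linarith) (by linarith)
      have e2 := ih (R₀ - τ * (R₀ - r)) (by linarith) (by linarith)
      rw [show R₀ - τ * (R₀ - r) - r = (1 - τ) * (R₀ - r) by ring,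
        Real.mul_rpow (by linarith) hL0.le, ← hK] at e1
      rw [show R₀ - (R₀ - τ * (R₀ - r)) = τ * (R₀ - r) by ring,
        Real.mul_rpow hτ0.le hL0.le, hτβ] at e2
      have e3 := mul_le_mul_of_nonneg_left e2 hθ0.le
      have e4 : A / (K * (R₀ - r) ^ β) + θ * (c * A / (s * (R₀ - r) ^ β) + θ ^ n * B)
          = (1 / K + θ * (c / s)) * A / (R₀ - r) ^ β + θ ^ (n + 1) * B := by
        field_simp
        ring
      rw [hceq] at e4
      linarith
  have hlim : Filter.Tendsto (fun n : ℕ => c * A / (R₀ - ρ) ^ β + θ ^ n * B) Filter.atTop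
      (nhds (c * A / (R₀ - ρ) ^ β + 0 * B)) :=
    ((tendsto_pow_atTop_nhds_zero_of_lt_one hθ0.le hθ1).mul_const B).const_add _
  rw [zero_mul, add_zero] at hlim
  exact ge_of_tendsto' hlim (fun n => key n ρ le_rfl hρR)
end

section
/- Let n, N ≥ 1 be integers, 1 ≤ p ≤ q real numbers and C ≥ 1. Let g : ℝ^{N×n} → ℝ be continuously differentiable and convex, and suppose that ‖ζ‖^p ≤ g(ζ) ≤ C(1 + ‖ζ‖^q) for every ζ ∈ ℝ^{N×n}. Then there exists a constant c > 0, depending only on n, N, q and C, such that ‖Dg(ζ)‖ ≤ c(1 + ‖ζ‖^{q−1}) for every ζ ∈ ℝ^{N×n}, where Dg(ζ) is the (Fréchet) derivative of g at ζ and ‖Dg(ζ)‖ its operator norm. -/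
theorem grad_ineq_aux {E : Type*} [NormedAddCommGroup E] [NormedSpace ℝ E] (g : E → ℝ)
    (hd : Differentiable ℝ g) (hc : ConvexOn ℝ Set.univ g) (x w : E) :
    fderiv ℝ g x w ≤ g (x + w) - g x := by
  have h1 : ConvexOn ℝ Set.univ (fun t : ℝ => g (AffineMap.lineMap x (x + w) t)) := by
    have := hc.comp_affineMap (AffineMap.lineMap x (x + w) : ℝ →ᵃ[ℝ] E)
    exact this
  have h2 : HasDerivAt (fun t : ℝ => g (AffineMap.lineMap x (x + w) t)) (fderiv ℝ g x w) 0 := by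
    have h3 : HasDerivAt (fun t : ℝ => (AffineMap.lineMap x (x + w) t : E)) w 0 := by
      have := (AffineMap.hasDerivAt_lineMap (a := x) (b := x + w) (x := (0 : ℝ)))
      simpa using this
    have h4 : HasFDerivAt g (fderiv ℝ g x) (AffineMap.lineMap x (x + w) (0 : ℝ)) := by
      simpa using (hd x).hasFDerivAt
    exact h4.comp_hasDerivAt (0 : ℝ) h3
  have h5 := h1.le_slope_of_hasDerivAt (Set.mem_univ 0) (Set.mem_univ 1) zero_lt_one h2
  simpa [slope_def_field] using h5

theorem arith_aux (q C t : ℝ) (hq : 1 ≤ q) (hC : 1 ≤ C) (ht : 0 ≤ t) :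
    C * (1 + (2 * (1 + t)) ^ q) ≤
      (C * (1 + 2 ^ q) * 2 ^ (q - 1)) * (1 + t ^ (q - 1)) * (1 + t) := by
  have hr : (1 : ℝ) ≤ 1 + t := by linarith
  have h1 : (1 : ℝ) ≤ (1 + t) ^ q := Real.one_le_rpow hr (by linarith)
  have h2 : (2 * (1 + t)) ^ q = 2 ^ q * (1 + t) ^ q := Real.mul_rpow (by norm_num) (by linarith)
  have h3 : (1 + t) ^ q = (1 + t) ^ (q - 1) * (1 + t) := by
    rw [Real.rpow_sub_one (by linarith)]
    field_simp
  have h4 : (1 + t) ^ (q - 1) ≤ 2 ^ (q - 1) * (1 + t ^ (q - 1)) := by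
    have hp : (0 : ℝ) ≤ t ^ (q - 1) := Real.rpow_nonneg ht _
    have hp2 : (0 : ℝ) < 2 ^ (q - 1) := Real.rpow_pos_of_pos (by norm_num) _
    rcases le_total t 1 with h | h
    · have : (1 + t) ^ (q - 1) ≤ (2 : ℝ) ^ (q - 1) :=
        Real.rpow_le_rpow (by linarith) (by linarith) (by linarith)
      nlinarith
    · have : (1 + t) ^ (q - 1) ≤ (2 * t) ^ (q - 1) :=
        Real.rpow_le_rpow (by linarith) (by linarith) (by linarith)
      rw [Real.mul_rpow (by norm_num) ht] at this
      nlinarith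
  have hp3 : (0 : ℝ) < 2 ^ q := Real.rpow_pos_of_pos (by norm_num) _
  calc C * (1 + (2 * (1 + t)) ^ q) ≤ C * ((1 + 2 ^ q) * (1 + t) ^ q) := by
        rw [h2]; gcongr; linarith
    _ = C * (1 + 2 ^ q) * (1 + t) ^ (q - 1) * (1 + t) := by rw [h3]; ring
    _ ≤ C * (1 + 2 ^ q) * (2 ^ (q - 1) * (1 + t ^ (q - 1))) * (1 + t) := by gcongr
    _ = _ := by ring

/-- Growth of the derivative of a convex integrand with `(p,q)`-growth: if `g` is `C¹`,
convex, and `‖ζ‖^p ≤ g(ζ) ≤ C(1 + ‖ζ‖^q)`, then `‖Dg(ζ)‖ ≤ c(1 + ‖ζ‖^{q−1})` with a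
constant `c > 0` depending only on `n, N, q, C`. -/
theorem stmt_4 (n N : ℕ) (hn : 1 ≤ n) (hN : 1 ≤ N) (q C : ℝ) (hC : 1 ≤ C) :
    ∃ c : ℝ, 0 < c ∧
      ∀ p : ℝ, 1 ≤ p → p ≤ q →
        ∀ g : EuclideanSpace ℝ (Fin N × Fin n) → ℝ,
          ContDiff ℝ 1 g →
          ConvexOn ℝ Set.univ g →
          (∀ ζ : EuclideanSpace ℝ (Fin N × Fin n),
            ‖ζ‖ ^ p ≤ g ζ ∧ g ζ ≤ C * (1 + ‖ζ‖ ^ q)) →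
          ∀ ζ : EuclideanSpace ℝ (Fin N × Fin n),
            ‖fderiv ℝ g ζ‖ ≤ c * (1 + ‖ζ‖ ^ (q - 1)) := by
  refine ⟨C * (1 + 2 ^ q) * 2 ^ (q - 1), by positivity, ?_⟩
  intro p hp hpq g hg hconv hb ζ
  have hr : (0 : ℝ) < 1 + ‖ζ‖ := by positivity
  have key : ∀ v : EuclideanSpace ℝ (Fin N × Fin n), ‖v‖ = 1 →
      fderiv ℝ g ζ v ≤ (C * (1 + 2 ^ q) * 2 ^ (q - 1)) * (1 + ‖ζ‖ ^ (q - 1)) := by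
    intro v hv
    have h1 := grad_ineq_aux g (hg.differentiable (by norm_num)) hconv ζ ((1 + ‖ζ‖) • v)
    have h2 : 0 ≤ g ζ := le_trans (by positivity) (hb ζ).1
    have h3 := (hb (ζ + (1 + ‖ζ‖) • v)).2
    have h4 : ‖ζ + (1 + ‖ζ‖) • v‖ ≤ 2 * (1 + ‖ζ‖) := by
      refine (norm_add_le _ _).trans ?_
      rw [norm_smul, hv, Real.norm_of_nonneg hr.le]
      linarith
    have h5 : ‖ζ + (1 + ‖ζ‖) • v‖ ^ q ≤ (2 * (1 + ‖ζ‖)) ^ q :=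
      Real.rpow_le_rpow (norm_nonneg _) h4 (by linarith)
    have h6 : C * (1 + ‖ζ + (1 + ‖ζ‖) • v‖ ^ q) ≤ C * (1 + (2 * (1 + ‖ζ‖)) ^ q) := by gcongr
    have h7 := arith_aux q C ‖ζ‖ (by linarith) hC (norm_nonneg _)
    rw [map_smul, smul_eq_mul] at h1
    refine le_of_mul_le_mul_right ?_ hr
    linarith
  refine ContinuousLinearMap.opNorm_le_of_unit_norm (by positivity) ?_
  intro v hv
  rw [Real.norm_eq_abs, abs_le']
  refine ⟨key v hv, ?_⟩
  have := key (-v) (by simpa using hv)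
  simpa using this
end

section
/- Let n ≥ 1 and N ≥ 2 be integers and let p be a real number with 1 ≤ p < N. There exists a constant C = C(N, p) > 0 such that the following holds: if v : ℝⁿ → ℝᴺ is differentiable at a point x₀, then, with w^a denoting the map x ↦ (v(x) − a)/‖v(x) − a‖ (which is differentiable at x₀ for every a ∈ ℝᴺ with a ≠ v(x₀), i.e. for Lebesgue-almost every a), one has ∫_{B^N_{1/2}(0)} ‖Dw^a(x₀)‖^p da ≤ C ‖Dv(x₀)‖^p, the integral being over a in the ball B^N_{1/2}(0) ⊂ ℝᴺ with respect to N-dimensional Lebesgue measure. -/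
open MeasureTheory Metric

/-- The derivative of the normalized map. -/
theorem norm_fderiv_normalize_le {n N : ℕ}
    (u : EuclideanSpace ℝ (Fin n) → EuclideanSpace ℝ (Fin N))
    (x₀ : EuclideanSpace ℝ (Fin n)) (hu : DifferentiableAt ℝ u x₀) (h0 : u x₀ ≠ 0) :
    DifferentiableAt ℝ (fun x => ‖u x‖⁻¹ • u x) x₀ ∧
      ‖fderiv ℝ (fun x => ‖u x‖⁻¹ • u x) x₀‖ ≤ 2 * ‖fderiv ℝ u x₀‖ * ‖u x₀‖⁻¹ := by
  have hpos : 0 < ‖u x₀‖ := norm_pos_iff.mpr h0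
  have hn : DifferentiableAt ℝ (fun x => ‖u x‖) x₀ := hu.norm ℝ h0
  have hn' : ‖fderiv ℝ (fun x => ‖u x‖) x₀‖ ≤ ‖fderiv ℝ u x₀‖ := by
    have hd : DifferentiableAt ℝ (fun y : EuclideanSpace ℝ (Fin N) => ‖y‖) (u x₀) :=
      differentiableAt_id.norm ℝ h0
    have e : fderiv ℝ (fun x => ‖u x‖) x₀ =
        (fderiv ℝ (fun y : EuclideanSpace ℝ (Fin N) => ‖y‖) (u x₀)).comp (fderiv ℝ u x₀) :=
      fderiv_comp x₀ hd hu
    rw [e]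
    refine (ContinuousLinearMap.opNorm_comp_le _ _).trans ?_
    have h1 : ‖fderiv ℝ (fun y : EuclideanSpace ℝ (Fin N) => ‖y‖) (u x₀)‖ ≤ 1 := by
      simpa using norm_fderiv_le_of_lipschitz ℝ
        (lipschitzWith_one_norm (E := EuclideanSpace ℝ (Fin N))) (x₀ := u x₀)
    exact mul_le_of_le_one_left (norm_nonneg _) h1
  have hi : HasFDerivAt (fun x => ‖u x‖⁻¹)
      (-(‖u x₀‖ ^ 2)⁻¹ • fderiv ℝ (fun x => ‖u x‖) x₀) x₀ :=
    (hasDerivAt_inv hpos.ne').comp_hasFDerivAt x₀ hn.hasFDerivAt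
  have hs := hi.smul hu.hasFDerivAt
  refine ⟨hs.differentiableAt, ?_⟩
  have hfd : fderiv ℝ (fun x => ‖u x‖⁻¹ • u x) x₀ = _ := hs.fderiv
  rw [hfd]
  refine (norm_add_le _ _).trans ?_
  rw [norm_smul, ContinuousLinearMap.norm_smulRight_apply, norm_smul, norm_neg, norm_inv,
    norm_inv, norm_pow, norm_norm]
  have : (‖u x₀‖ ^ 2)⁻¹ * ‖fderiv ℝ (fun x => ‖u x‖) x₀‖ * ‖u x₀‖
      = ‖fderiv ℝ (fun x => ‖u x‖) x₀‖ * ‖u x₀‖⁻¹ := by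
    field_simp
  rw [this]
  have := mul_le_mul_of_nonneg_right hn' (inv_nonneg.mpr hpos.le)
  linarith

/-- Averaged derivative bound for projections: for `1 ≤ p < N` there is `C = C(N,p) > 0`
such that, for `v` differentiable at `x₀` and `w^a(x) = (v(x) − a)/‖v(x) − a‖` (which is
differentiable at `x₀` for every `a ≠ v(x₀)`),
`∫_{B^N_{1/2}(0)} ‖Dw^a(x₀)‖^p da ≤ C ‖Dv(x₀)‖^p`. -/
theorem stmt_7 (N : ℕ) (hN : 2 ≤ N) (p : ℝ) (hp1 : 1 ≤ p) (hpN : p < N) :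
    ∃ C : ℝ, 0 < C ∧
      ∀ (n : ℕ), 1 ≤ n →
        ∀ (v : EuclideanSpace ℝ (Fin n) → EuclideanSpace ℝ (Fin N))
          (x₀ : EuclideanSpace ℝ (Fin n)),
          DifferentiableAt ℝ v x₀ →
          (∀ a : EuclideanSpace ℝ (Fin N), a ≠ v x₀ →
            DifferentiableAt ℝ (fun x => ‖v x - a‖⁻¹ • (v x - a)) x₀) ∧
          (∫⁻ a in ball (0 : EuclideanSpace ℝ (Fin N)) (1 / 2),
              ENNReal.ofReal
                (‖fderiv ℝ (fun x => ‖v x - a‖⁻¹ • (v x - a)) x₀‖ ^ p)) ≤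
            ENNReal.ofReal (C * ‖fderiv ℝ v x₀‖ ^ p) := by
  have hdim : Module.finrank ℝ (EuclideanSpace ℝ (Fin N)) = N := by simp
  have : Nonempty (Fin N) := ⟨⟨0, by omega⟩⟩
  have : Nontrivial (EuclideanSpace ℝ (Fin N)) :=
    Module.nontrivial_of_finrank_pos (R := ℝ) (by rw [hdim]; omega)
  let g : EuclideanSpace ℝ (Fin N) → ℝ := fun b => ‖b‖ ^ (-p)
  have hgm : Measurable g := by fun_prop
  have hg : IntegrableOn g (ball 0 1) volume := by
    refine integrableOn_ball_of_norm_le_rpow (C := 1) (α := p) (by rw [hdim]; omega)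
      (by rw [hdim]; exact hpN) ?_ hgm.aestronglyMeasurable
    refine Filter.Eventually.of_forall fun b => ?_
    rw [one_mul, Real.norm_of_nonneg (Real.rpow_nonneg (norm_nonneg b) _)]
  let G : EuclideanSpace ℝ (Fin N) → ENNReal :=
    (ball 0 1).indicator (fun b => ENNReal.ofReal (g b))
  have hGm : Measurable G := (ENNReal.measurable_ofReal.comp hgm).indicator measurableSet_ball
  have hGfin : ∫⁻ b, G b ≠ ⊤ := by
    rw [lintegral_indicator measurableSet_ball]
    exact (hg.lintegral_lt_top).ne
  let K : ENNReal := (∫⁻ b, G b) + volume (ball (0 : EuclideanSpace ℝ (Fin N)) (1 / 2))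
  have hK : K ≠ ⊤ := ENNReal.add_ne_top.mpr ⟨hGfin, measure_ball_lt_top.ne⟩
  have hKpos : 0 < K.toReal := ENNReal.toReal_pos
    (by
      have := (measure_ball_pos volume (0 : EuclideanSpace ℝ (Fin N)) (r := 1 / 2) (by norm_num))
      exact (lt_of_lt_of_le this le_add_self).ne') hK
  refine ⟨2 ^ p * K.toReal, by positivity, ?_⟩
  intro n _ v x₀ hv
  have key : ∀ a : EuclideanSpace ℝ (Fin N), a ≠ v x₀ →
      DifferentiableAt ℝ (fun x => ‖v x - a‖⁻¹ • (v x - a)) x₀ ∧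
      ‖fderiv ℝ (fun x => ‖v x - a‖⁻¹ • (v x - a)) x₀‖
        ≤ 2 * ‖fderiv ℝ v x₀‖ * ‖v x₀ - a‖⁻¹ := by
    intro a ha
    have h := norm_fderiv_normalize_le (fun x => v x - a) x₀ (hv.sub_const a)
      (sub_ne_zero.mpr ha.symm)
    rwa [fderiv_sub_const] at h
  refine ⟨fun a ha => (key a ha).1, ?_⟩
  have hp0 : 0 ≤ p := by linarith
  have hae : ∀ᵐ a ∂(volume.restrict (ball (0 : EuclideanSpace ℝ (Fin N)) (1 / 2))),
      ENNReal.ofReal (‖fderiv ℝ (fun x => ‖v x - a‖⁻¹ • (v x - a)) x₀‖ ^ p) ≤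
        ENNReal.ofReal (2 ^ p * ‖fderiv ℝ v x₀‖ ^ p) * (G (v x₀ - a) + 1) := by
    refine ae_restrict_of_ae ?_
    filter_upwards [compl_mem_ae_iff.mpr (measure_singleton (v x₀))] with a ha
    have ha' : a ≠ v x₀ := ha
    have hpos : 0 < ‖v x₀ - a‖ := norm_pos_iff.mpr (sub_ne_zero.mpr ha'.symm)
    have h1 : ‖fderiv ℝ (fun x => ‖v x - a‖⁻¹ • (v x - a)) x₀‖ ^ p ≤
        (2 ^ p * ‖fderiv ℝ v x₀‖ ^ p) * g (v x₀ - a) := by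
      refine (Real.rpow_le_rpow (norm_nonneg _) (key a ha').2 hp0).trans_eq ?_
      rw [Real.mul_rpow (by positivity) (by positivity),
        Real.mul_rpow (by positivity) (by positivity), Real.inv_rpow hpos.le,
        ← Real.rpow_neg hpos.le]
    refine (ENNReal.ofReal_le_ofReal h1).trans ?_
    rw [ENNReal.ofReal_mul (by positivity)]
    gcongr
    by_cases hb : v x₀ - a ∈ ball (0 : EuclideanSpace ℝ (Fin N)) 1
    · have : G (v x₀ - a) = ENNReal.ofReal (g (v x₀ - a)) := Set.indicator_of_mem hb _
      rw [this]
      exact le_self_add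
    · have h2 : 1 ≤ ‖v x₀ - a‖ := by simpa using hb
      refine le_trans ?_ le_add_self
      refine ENNReal.ofReal_le_one.mpr ?_
      exact Real.rpow_le_one_of_one_le_of_nonpos h2 (by linarith)
  refine (lintegral_mono_ae hae).trans ?_
  rw [lintegral_const_mul' _ _ ENNReal.ofReal_ne_top, lintegral_add_right _ measurable_const]
  have h3 : ∫⁻ a in ball (0 : EuclideanSpace ℝ (Fin N)) (1 / 2), G (v x₀ - a) ≤ ∫⁻ b, G b :=
    (setLIntegral_le_lintegral _ _).trans_eq (lintegral_sub_left_eq_self G (v x₀))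
  have h4 : (∫⁻ _ in ball (0 : EuclideanSpace ℝ (Fin N)) (1 / 2), (1 : ENNReal))
      = volume (ball (0 : EuclideanSpace ℝ (Fin N)) (1 / 2)) := by simp
  rw [h4]
  calc _ ≤ ENNReal.ofReal (2 ^ p * ‖fderiv ℝ v x₀‖ ^ p) * K :=
        mul_le_mul_right (add_le_add_left h3 _) _
    _ = ENNReal.ofReal (2 ^ p * ‖fderiv ℝ v x₀‖ ^ p) * ENNReal.ofReal K.toReal := by
        rw [ENNReal.ofReal_toReal hK]
    _ = _ := by
        rw [← ENNReal.ofReal_mul (by positivity)]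
        congr 1
        ring
end

section
/- Let N ≥ 2 be an integer, let q be a real number with 1 < q < N, and let M ≥ 1. Let h : [0, ∞) → [1, ∞) be continuous, concave and non-decreasing, satisfying h(ct) ≤ M c h(t) for every c ≥ 1 and t ≥ 0, and such that for every constant r ≥ 1 the function t ↦ t^r h(t) is convex on [0, ∞). Then there exists a constant C > 0, depending only on N, q and M, such that for every real r with 1 ≤ r ≤ q, every w ∈ ℝᴺ with ‖w‖ = 1, and every ξ ≥ 0, ∫_{B^N_{1/2}(0)} (2ξ/‖w − a‖)^r h(2ξ/‖w − a‖) da ≤ C ξ^r h(ξ). -/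
open MeasureTheory Metric

/-- Jensen-type averaged bound for the weight `h`: for `1 < q < N`, `M ≥ 1`, there is
`C = C(N, q, M) > 0` such that for every continuous, concave, non-decreasing
`h : [0,∞) → [1,∞)` with `h(ct) ≤ M c h(t)` for `c ≥ 1` and `t ↦ t^r h(t)` convex for
every `r ≥ 1`, every `r ∈ [1, q]`, every unit vector `w` and every `ξ ≥ 0`,
`∫_{B^N_{1/2}(0)} (2ξ/‖w−a‖)^r h(2ξ/‖w−a‖) da ≤ C ξ^r h(ξ)`. -/
theorem stmt_10 (N : ℕ) (hN : 2 ≤ N) (q M : ℝ) (hq1 : 1 < q) (hqN : q < N) (hM : 1 ≤ M) :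
    ∃ C : ℝ, 0 < C ∧
      ∀ h : ℝ → ℝ,
        ContinuousOn h (Set.Ici 0) →
        ConcaveOn ℝ (Set.Ici 0) h →
        MonotoneOn h (Set.Ici 0) →
        (∀ t : ℝ, 0 ≤ t → 1 ≤ h t) →
        (∀ c : ℝ, 1 ≤ c → ∀ t : ℝ, 0 ≤ t → h (c * t) ≤ M * c * h t) →
        (∀ r : ℝ, 1 ≤ r → ConvexOn ℝ (Set.Ici 0) (fun t => t ^ r * h t)) →
        ∀ r : ℝ, 1 ≤ r → r ≤ q →
          ∀ w : EuclideanSpace ℝ (Fin N), ‖w‖ = 1 →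
            ∀ ξ : ℝ, 0 ≤ ξ →
              (∫⁻ a in ball (0 : EuclideanSpace ℝ (Fin N)) (1 / 2),
                  ENNReal.ofReal
                    ((2 * ξ / ‖w - a‖) ^ r * h (2 * ξ / ‖w - a‖))) ≤
                ENNReal.ofReal (C * ξ ^ r * h ξ) := by
  set V : ENNReal := volume (ball (0 : EuclideanSpace ℝ (Fin N)) (1 / 2)) with hV
  have hVtop : V ≠ ⊤ := measure_ball_lt_top.ne
  have hV0 : 0 ≤ V.toReal := ENNReal.toReal_nonneg
  have h4q : (0 : ℝ) < 4 ^ q := by positivity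
  refine ⟨4 ^ q * (4 * M) * (V.toReal + 1), by positivity, ?_⟩
  intro h _ _ hmono hone hdbl _ r hr1 hrq w hw ξ hξ
  have hhξ : 1 ≤ h ξ := hone ξ hξ
  have hξr : 0 ≤ ξ ^ r := Real.rpow_nonneg hξ r
  have key : ∀ a ∈ ball (0 : EuclideanSpace ℝ (Fin N)) (1 / 2),
      ENNReal.ofReal ((2 * ξ / ‖w - a‖) ^ r * h (2 * ξ / ‖w - a‖)) ≤
        ENNReal.ofReal (4 ^ q * (4 * M) * (ξ ^ r * h ξ)) := by
    intro a ha
    apply ENNReal.ofReal_le_ofReal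
    have ha' : ‖a‖ < 1 / 2 := by simpa using ha
    have hd : 1 / 2 ≤ ‖w - a‖ := by
      have := norm_sub_norm_le w a
      linarith
    have hd0 : 0 < ‖w - a‖ := by linarith
    have ht0 : 0 ≤ 2 * ξ / ‖w - a‖ := by positivity
    have ht : 2 * ξ / ‖w - a‖ ≤ 4 * ξ := by
      rw [div_le_iff₀ hd0]
      nlinarith
    have h1 : (2 * ξ / ‖w - a‖) ^ r ≤ 4 ^ q * ξ ^ r := by
      calc (2 * ξ / ‖w - a‖) ^ r ≤ (4 * ξ) ^ r :=
            Real.rpow_le_rpow ht0 ht (by linarith)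
        _ = 4 ^ r * ξ ^ r := Real.mul_rpow (by norm_num) hξ
        _ ≤ 4 ^ q * ξ ^ r := by
            apply mul_le_mul_of_nonneg_right _ hξr
            exact Real.rpow_le_rpow_of_exponent_le (by norm_num) hrq
    have h2 : h (2 * ξ / ‖w - a‖) ≤ M * 4 * h ξ :=
      (hmono ht0 (Set.mem_Ici.2 (by positivity)) ht).trans (hdbl 4 (by norm_num) ξ hξ)
    have h3 : 0 ≤ h (2 * ξ / ‖w - a‖) := by linarith [hone _ ht0]
    calc (2 * ξ / ‖w - a‖) ^ r * h (2 * ξ / ‖w - a‖)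
        ≤ (4 ^ q * ξ ^ r) * (M * 4 * h ξ) := mul_le_mul h1 h2 h3 (by positivity)
      _ = 4 ^ q * (4 * M) * (ξ ^ r * h ξ) := by ring
  have hK : 0 ≤ 4 ^ q * (4 * M) * (ξ ^ r * h ξ) := by positivity
  refine (setLIntegral_mono' measurableSet_ball key).trans ?_
  rw [setLIntegral_const, ← hV, ← ENNReal.ofReal_toReal hVtop, ← ENNReal.ofReal_mul hK]
  apply ENNReal.ofReal_le_ofReal
  rw [ENNReal.toReal_ofReal hV0]
  nlinarith
end
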